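/- For R, S, T, V ∈ PRT', let N_{R,S,T}(V) := {(I_1, I_2, I_3) : I_1, I_2, I_3 are pairwise disjoint subsets of L(V) with I_1 ∪ I_2 ∪ I_3 = L(V), V|I_1 = R, V|I_2 = S, and V|I_3 = T}. Then Σ_{W ∈ PRT'} #N_{R,S}(W)·#N_{W,T}(V) = #N_{R,S,T}(V) = Σ_{W ∈ PRT'} #N_{S,T}(W)·#N_{R,W}(V), where all sums have only finitely many nonzero terms. Consequently (R ⧢ S) ⧢ T = R ⧢ (S ⧢ T). -/

import Mathlib

inductive PTree : Type where
  | node : List PTree → PTree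

namespace PTree

/-- the single-vertex tree -/
def x : PTree := node []

/-- the number of leaves of a tree -/
def deg : PTree → ℕ
  | node l => max 1 (l.attach.map fun t => deg t.1).sum
decreasing_by
  have := List.sizeOf_lt_of_mem t.2
  simp; omega

/-- a tree is reduced if no vertex has arity 1 -/
inductive Reduced : PTree → Prop where
  | node (l : List PTree) (hlen : l.length ≠ 1) (h : ∀ t ∈ l, Reduced t) :
      Reduced (node l)

/-- the reduction of a tree -/
def red : PTree → PTree
  | node [t] => red t
  | node l => node (l.attach.map fun t => red t.1)
decreasing_by
  · simp; omega
  · have := List.sizeOf_lt_of_mem t.2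
    simp; omega

mutual
/-- the spanning subtree `T_I` determined by a set `I ⊆ range (deg T)` of leaf positions
(counted from the left, starting at `0`) -/
def sub : PTree → Finset ℕ → PTree
  | node l, I => node (subList l I)
/-- auxiliary: the list of spanning subtrees of the children, children without
selected leaves being dropped -/
def subList : List PTree → Finset ℕ → List PTree
  | [], _ => []
  | t :: ts, I =>
      (if (I.filter (· < t.deg)).Nonempty then [sub t (I.filter (· < t.deg))] else [])
        ++ subList ts ((I.filter fun j => t.deg ≤ j).image fun j => j - t.deg)
end

/-- the contraction `T|I`: the reduction of the spanning subtree, `1` (i.e. `none`) if `I = ∅` -/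
def contract (T : PTree) (I : Finset ℕ) : Option PTree :=
  if I = ∅ then none else some (red (sub T I))

end PTree

/-- `PRT'`: finite planar rooted trees together with the empty tree `1 = none` -/
abbrev OT := Option PTree

/-- `deg` on `PRT'` -/
def degO (o : OT) : ℕ := o.elim 0 PTree.deg

/-- membership in `PRT'` = reduced trees together with the empty tree `1` -/
def ROT (o : OT) : Prop := ∀ t, o = some t → t.Reduced

/-- contraction on `PRT'` -/
def contractO : OT → Finset ℕ → OT
  | none, _ => none
  | some t, I => PTree.contract t I

open Classical in
/-- `N_{S,T}(V)` as a finite set of subsets of the set of leaf positions of `V` -/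
noncomputable def NFinset (S T V : OT) : Finset (Finset ℕ) :=
  (Finset.range (degO V)).powerset.filter fun I =>
    contractO V I = S ∧ contractO V (Finset.range (degO V) \ I) = T

/-- `#N_{S,T}(V)` -/
noncomputable def Ncount (S T V : OT) : ℕ := (NFinset S T V).card

/-- the free `K`-module on `PRT'` (realized inside the free module on all of `Option PTree`;
the elements of the free module on `PRT'` are those whose support satisfies `ROT`) -/
abbrev AMod (K : Type) [Field K] := OT →₀ K

/-- `f` belongs to the free `K`-module on `PRT'` -/
def suppRed (K : Type) [Field K] (f : AMod K) : Prop := ∀ t ∈ f.support, ROT t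

/-- the planar shuffle product `S ⧢ T = Σ_{V ∈ PRT'} #N_{S,T}(V)·V` of two monomials -/
noncomputable def shuffleM (K : Type) [Field K] (S T : OT) : AMod K :=
  ∑ᶠ (V : OT) (_ : ROT V), Finsupp.single V ((Ncount S T V : K))

/-- the `K`-bilinear extension of the planar shuffle product -/
noncomputable def shuffleF (K : Type) [Field K] (f g : AMod K) : AMod K :=
  f.sum fun S a => g.sum fun T b => (a * b) • shuffleM K S T

/-- tensor-like product of a list of module elements, as a finitely supported
function on lists of basis elements -/
noncomputable def listProd (K : Type) [Field K] {σ : Type} : List (σ →₀ K) → (List σ →₀ K)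
  | [] => Finsupp.single [] 1
  | f :: fs => f.sum fun t a => (listProd K fs).sum fun ts b => Finsupp.single (t :: ts) (a * b)

/-- the `K`-multilinear extension of an operation on basis elements -/
noncomputable def mulExt (K : Type) [Field K] {σ τ : Type} (op : List σ → τ)
    (l : List (σ →₀ K)) : τ →₀ K :=
  (listProd K l).sum fun ts c => Finsupp.single (op ts) c

/-- `gr` : delete all entries equal to `1`, then return `1` if no entry remains,
the unique entry if exactly one remains, and the grafting `node` otherwise -/
def grO (ts : List OT) : OT :=
  match ts.reduceOption with
  | [] => none
  | [t] => some t
  | l => some (PTree.node l)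

/-- the `K`-multilinear extension of `gr` -/
noncomputable def grF (K : Type) [Field K] (l : List (AMod K)) : AMod K := mulExt K grO l

/-- the `K`-multilinear extension of the grafting `node` (junk value `0` on lists
containing the empty tree `1`, which never occurs in its uses here) -/
noncomputable def nodeF (K : Type) [Field K] (l : List (AMod K)) : AMod K :=
  (listProd K l).sum fun ts c =>
    match (ts.mapM (id : Option PTree → Option PTree) : Option (List PTree)) with
    | some l' => Finsupp.single (some (PTree.node l')) c
    | none => 0

open Classical in
/-- `N_{R,S,T}(V)`: triples `(I_1,I_2,I_3)` of pairwise disjoint subsets of `L(V)` covering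
`L(V)` with `V|I_1 = R`, `V|I_2 = S`, `V|I_3 = T`. -/
noncomputable def NFinset3 (R S T V : OT) : Finset (Finset ℕ × Finset ℕ × Finset ℕ) :=
  ((Finset.range (degO V)).powerset ×ˢ (Finset.range (degO V)).powerset
      ×ˢ (Finset.range (degO V)).powerset).filter fun q =>
    Disjoint q.1 q.2.1 ∧ Disjoint q.1 q.2.2 ∧ Disjoint q.2.1 q.2.2 ∧
    q.1 ∪ q.2.1 ∪ q.2.2 = Finset.range (degO V) ∧
    contractO V q.1 = R ∧ contractO V q.2.1 = S ∧ contractO V q.2.2 = T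


namespace PTree

theorem deg_node (l : List PTree) : deg (node l) = max 1 (l.map deg).sum := by
  rw [deg]; simp

theorem deg_pos (t : PTree) : 0 < deg t := by
  cases t; rw [deg_node]; simp

/-- Smart node constructor. -/
def gr : List PTree → Option PTree
  | [] => none
  | [t] => some t
  | l => some (node l)

theorem gr_two {l : List PTree} (h : 2 ≤ l.length) : gr l = some (node l) := by
  match l, h with
  | _ :: _ :: _, _ => rfl

theorem red_node (l : List PTree) (h : l ≠ []) : some (red (node l)) = gr (l.map red) := by
  match l, h with
  | [t], _ => rw [red]; rfl
  | a :: b :: l, _ =>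
    rw [red]
    · simp [gr]
    · simp

mutual
/-- contraction by a Boolean predicate on leaf positions -/
def C : PTree → (ℕ → Bool) → Option PTree
  | node [], p => if p 0 then some x else none
  | node (t :: ts), p => gr (CL (t :: ts) p)
/-- the list of nonempty contractions of children -/
def CL : List PTree → (ℕ → Bool) → List PTree
  | [], _ => []
  | t :: ts, p => (C t p).toList ++ CL ts (fun i => p (t.deg + i))
end

theorem C_node {l : List PTree} (h : l ≠ []) (p : ℕ → Bool) : C (node l) p = gr (CL l p) := by
  match l, h with
  | t :: ts, _ => rw [C]

theorem deg_node' {l : List PTree} (h : l ≠ []) : deg (node l) = (l.map deg).sum := by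
  match l, h with
  | t :: ts, _ => 
    rw [deg_node]; have := deg_pos t; simp; omega

theorem degO_gr (l : List PTree) : degO (gr l) = (l.map deg).sum := by
  match l with
  | [] => rfl
  | [t] => simp [gr, degO]
  | a :: b :: l => 
    rw [gr_two (by simp)]
    exact deg_node' (by simp)

theorem sum_toList (o : Option PTree) : (o.toList.map deg).sum = degO o := by
  cases o <;> simp [degO]

mutual
theorem C_congr : ∀ (t : PTree) (p q : ℕ → Bool), (∀ i < t.deg, p i = q i) → C t p = C t q
  | node [], p, q, h => by
    rw [C, C, h 0 (deg_pos _)]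
  | node (t :: ts), p, q, h => by
    rw [C, C, CL_congr (t :: ts) p q]
    rwa [deg_node' (by simp)] at h
theorem CL_congr : ∀ (l : List PTree) (p q : ℕ → Bool),
    (∀ i < (l.map deg).sum, p i = q i) → CL l p = CL l q
  | [], p, q, h => by rw [CL, CL]
  | t :: ts, p, q, h => by
    simp only [List.map_cons, List.sum_cons] at h
    rw [CL, CL, C_congr t p q (fun i hi => h i (by omega)),
      CL_congr ts _ (fun i => q (t.deg + i)) (fun i hi => h _ (by omega))]
end

mutual
theorem degO_C : ∀ (t : PTree) (p : ℕ → Bool), degO (C t p) = Nat.count (fun i => p i = true) t.deg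
  | node [], p => by
    rw [C, deg_node]
    by_cases h : p 0 <;> simp [h, degO, x, deg_node, Nat.count_succ]
  | node (t :: ts), p => by
    rw [C, degO_gr, sum_CL, deg_node' (by simp)]
theorem sum_CL : ∀ (l : List PTree) (p : ℕ → Bool),
    ((CL l p).map deg).sum = Nat.count (fun i => p i = true) (l.map deg).sum
  | [], p => by rw [CL]; simp
  | t :: ts, p => by
    rw [CL, List.map_append, List.sum_append, sum_toList, degO_C t p, sum_CL ts]
    rw [List.map_cons, List.sum_cons, Nat.count_add]
end

/-- composition of selections -/
def cmp (p q : ℕ → Bool) : ℕ → Bool := fun j => p j && q (Nat.count (fun i => p i = true) j)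

theorem cmp_shift (p q : ℕ → Bool) (a : ℕ) : (fun i => cmp p q (a + i)) =
    cmp (fun i => p (a + i)) (fun i => q (Nat.count (fun i => p i = true) a + i)) := by
  funext i
  simp only [cmp, Nat.count_add]

theorem CL_append (l m : List PTree) (q : ℕ → Bool) :
    CL (l ++ m) q = CL l q ++ CL m (fun i => q ((l.map deg).sum + i)) := by
  induction l generalizing q with
  | nil => simp [CL]
  | cons t ts ih =>
    simp only [List.cons_append, CL, ih, List.map_cons, List.sum_cons, List.append_assoc, add_assoc]

theorem C_gr (l : List PTree) (q : ℕ → Bool) : (gr l).bind (C · q) = gr (CL l q) := by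
  match l with
  | [] => simp [gr, CL]
  | [t] => 
    simp only [gr, CL, Option.bind_some, List.append_nil]
    cases C t q <;> simp [gr]
  | a :: b :: l =>
    rw [gr_two (by simp)]
    simp only [Option.bind_some]
    exact C_node (by simp) q

theorem CL_toList (o : Option PTree) (q : ℕ → Bool) :
    CL o.toList q = (o.bind (C · q)).toList := by
  cases o <;> simp [CL]

mutual
theorem C_cmp : ∀ (t : PTree) (p q : ℕ → Bool), (C t p).bind (C · q) = C t (cmp p q)
  | node [], p, q => by
    rw [C, C]
    by_cases h : p 0 <;> simp [h, cmp, x, C]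
  | node (t :: ts), p, q => by
    rw [C, C, C_gr, CL_cmp]
theorem CL_cmp : ∀ (l : List PTree) (p q : ℕ → Bool), CL (CL l p) q = CL l (cmp p q)
  | [], p, q => by simp [CL]
  | t :: ts, p, q => by
    rw [CL, CL, CL_append, CL_toList, C_cmp t p q, cmp_shift, ← CL_cmp ts, sum_toList, degO_C]
end

theorem reduced_gr {l : List PTree} (h : ∀ t ∈ l, Reduced t) : ∀ t ∈ gr l, Reduced t := by
  match l with
  | [] => simp [gr]
  | [t] => simpa [gr] using h
  | a :: b :: l =>
    rw [gr_two (by simp)]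
    intro t ht
    obtain rfl : _ = t := by simpa using ht
    exact Reduced.node _ (by simp) h

mutual
theorem reduced_C : ∀ (t : PTree) (p : ℕ → Bool), ∀ s ∈ C t p, Reduced s
  | node [], p => by
    intro s hs
    rw [C] at hs
    split_ifs at hs
    · obtain rfl : _ = s := by simpa using hs
      exact Reduced.node _ (by simp) (by simp)
    · simp at hs
  | node (t :: ts), p => by
    rw [C]
    exact reduced_gr (reduced_CL (t :: ts) p)
theorem reduced_CL : ∀ (l : List PTree) (p : ℕ → Bool), ∀ s ∈ CL l p, Reduced s
  | [], p => by simp [CL]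
  | t :: ts, p => by
    intro s hs
    rw [CL, List.mem_append] at hs
    rcases hs with hs | hs
    · exact reduced_C t p s (by simpa using hs)
    · exact reduced_CL ts _ s hs
end

theorem subList_ne_nil (l : List PTree) (I : Finset ℕ) (hI : ∀ i ∈ I, i < (l.map deg).sum)
    (h : subList l I = []) : I = ∅ := by
  induction l generalizing I with
  | nil => 
    simp at hI
    exact Finset.eq_empty_of_forall_notMem hI
  | cons t ts ih =>
    rw [subList, List.append_eq_nil_iff] at h
    obtain ⟨h1, h2⟩ := h
    have h3 := ih _ ?_ h2
    · apply Finset.eq_empty_of_forall_notMem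
      intro i hi
      by_cases hlt : i < t.deg
      · rw [if_pos ⟨i, by simp [hi, hlt]⟩] at h1
        simp at h1
      · have : i - t.deg ∈ (∅ : Finset ℕ) := by
          rw [← h3]
          exact Finset.mem_image_of_mem _ (by simp [hi]; omega)
        simp at this
    · intro i hi
      simp only [Finset.mem_image, Finset.mem_filter] at hi
      obtain ⟨j, ⟨hj, hj'⟩, rfl⟩ := hi
      have := hI j hj
      simp only [List.map_cons, List.sum_cons] at this
      omega

mutual
theorem contract_eq : ∀ (t : PTree) (I : Finset ℕ), (∀ i ∈ I, i < t.deg) →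
    contract t I = C t (fun i => decide (i ∈ I))
  | node [], I, hI => by
    rw [C, contract]
    simp only [deg_node, List.map_nil, List.sum_nil] at hI
    by_cases h : I = ∅
    · simp [h]
    · obtain ⟨i, hi⟩ := Finset.nonempty_iff_ne_empty.mpr h
      have : i = 0 := by have := hI i hi; omega
      subst this
      simp [h, hi, sub, subList, red, x]
  | node (t :: ts), I, hI => by
    rw [deg_node' (by simp)] at hI
    rw [C, contract, ← subList_eq (t :: ts) I hI]
    by_cases h : I = ∅
    · rw [if_pos h, subList_eq _ I hI]
      symm
      have := degO_gr (CL (t :: ts) (fun i => decide (i ∈ I)))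
      rw [sum_CL] at this
      have h0 : degO (gr (CL (t :: ts) (fun i => decide (i ∈ I)))) = 0 := by
        rw [this]
        simp [h]
      revert h0
      cases gr (CL (t :: ts) (fun i => decide (i ∈ I))) with
      | none => simp
      | some s => 
        intro h0
        exact absurd h0 (deg_pos s).ne'
    · rw [if_neg h, sub, red_node]
      intro h'
      exact h (subList_ne_nil _ _ hI h')
theorem subList_eq : ∀ (l : List PTree) (I : Finset ℕ), (∀ i ∈ I, i < (l.map deg).sum) →
    (subList l I).map red = CL l (fun i => decide (i ∈ I))
  | [], I, hI => by simp [CL, subList]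
  | t :: ts, I, hI => by
    simp only [List.map_cons, List.sum_cons] at hI
    rw [CL, subList, List.map_append, subList_eq ts]
    · congr 1
      · rw [C_congr t _ (fun i => decide (i ∈ I.filter (· < t.deg)))
          (by intro i hi; simp [hi]), ← contract_eq t _ (by simp), contract]
        by_cases h : I.filter (· < t.deg) = ∅
        · rw [if_pos h, if_neg (by simp [h])]; rfl
        · rw [if_neg h, if_pos (Finset.nonempty_iff_ne_empty.mpr h)]; rfl
      · congr 1
        funext i
        simp only [Finset.mem_image, Finset.mem_filter, decide_eq_decide]
        constructor
        · rintro ⟨j, ⟨hj, hj'⟩, rfl⟩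
          rwa [Nat.add_sub_cancel' hj']
        · intro h
          exact ⟨_, ⟨h, by omega⟩, by omega⟩
    · intro i hi
      simp only [Finset.mem_image, Finset.mem_filter] at hi
      obtain ⟨j, ⟨hj, hj'⟩, rfl⟩ := hi
      have := hI j hj
      omega
end

theorem one_le_length_le (l : List PTree) : l.length ≤ (l.map deg).sum := by
  induction l with
  | nil => simp
  | cons t ts ih => have := deg_pos t; simp; omega

theorem deg_lt_of_mem {l : List PTree} (hl : l.length ≠ 1) {t : PTree} (ht : t ∈ l) :
    t.deg < (node l).deg := by
  have hne : l ≠ [] := by rintro rfl; simp at ht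
  rw [deg_node' hne]
  obtain ⟨a, b, rfl⟩ := List.append_of_mem ht
  have := one_le_length_le a
  have := one_le_length_le b
  simp at hl ⊢
  have : a.length ≠ 0 ∨ b.length ≠ 0 := by
    by_contra h
    push Not at h
    simp at h
    exact hl (by simp [h.1, h.2])
  omega

theorem finite_reduced (n : ℕ) : {t : PTree | t.Reduced ∧ t.deg < n}.Finite := by
  induction n with
  | zero => simp
  | succ n ih =>
    have : Finite {t : PTree | t.Reduced ∧ t.deg < n} := ih
    refine (((List.finite_length_le {t : PTree | t.Reduced ∧ t.deg < n} n).image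
      (fun l => node (l.map Subtype.val)))).subset ?_
    rintro t ⟨ht, hd⟩
    cases ht with
    | node l hlen h =>
      have hm : ∀ s ∈ l, s ∈ {t : PTree | t.Reduced ∧ t.deg < n} := fun s hs =>
        ⟨h s hs, by have := deg_lt_of_mem hlen hs; omega⟩
      lift l to List {t : PTree | t.Reduced ∧ t.deg < n} using hm
      refine ⟨l, ?_, rfl⟩
      have := one_le_length_le (l.map Subtype.val)
      have h2 := deg_node (l.map Subtype.val)
      simp only [List.length_map] at this
      show l.length ≤ n
      have : deg (node (l.map Subtype.val)) < n + 1 := hd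
      omega

end PTree

section
open PTree

theorem contractO_eq (V : OT) (I : Finset ℕ) (hI : I ⊆ Finset.range (degO V)) :
    contractO V I = V.bind (C · (fun i => decide (i ∈ I))) := by
  cases V with
  | none => rfl
  | some t => exact contract_eq t I (fun i hi => by simpa [degO] using hI hi)

theorem ROT_contractO (V : OT) (I : Finset ℕ) (hI : I ⊆ Finset.range (degO V)) :
    ROT (contractO V I) := by
  rw [contractO_eq V I hI]
  cases V with
  | none => intro t ht; simp at ht
  | some t => intro s hs; exact reduced_C t _ s hs

theorem count_eq_card (I : Finset ℕ) (n : ℕ) (hI : I ⊆ Finset.range n) :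
    Nat.count (fun i => decide (i ∈ I) = true) n = I.card := by
  rw [Nat.count_eq_card_filter_range]
  congr 1
  ext i
  have := @hI i
  simp only [Finset.mem_filter, decide_eq_true_eq]
  tauto

theorem degO_contractO (V : OT) (I : Finset ℕ) (hI : I ⊆ Finset.range (degO V)) :
    degO (contractO V I) = I.card := by
  rw [contractO_eq V I hI]
  cases V with
  | none => 
    have : I = ∅ := by simpa [degO] using hI
    simp [this, degO]
  | some t => 
    simp only [Option.bind_some]
    rw [degO_C]
    exact count_eq_card I _ hI

/-- number of elements of `J` below `j` -/
def rk (J : Finset ℕ) (j : ℕ) : ℕ := Nat.count (fun i => decide (i ∈ J) = true) j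

/-- the subset of `J` with ranks in `I` -/
def pull (J I : Finset ℕ) : Finset ℕ := J.filter fun j => rk J j ∈ I

theorem contractO_contractO (V : OT) (J I : Finset ℕ) (hJ : J ⊆ Finset.range (degO V))
    (hI : I ⊆ Finset.range J.card) :
    contractO (contractO V J) I = contractO V (pull J I) := by
  rw [contractO_eq (contractO V J) I (by rwa [degO_contractO V J hJ]), contractO_eq V J hJ,
    contractO_eq V (pull J I) ((Finset.filter_subset _ _).trans hJ)]
  cases V with
  | none => rfl
  | some t => 
    simp only [Option.bind_some]
    rw [C_cmp]
    congr 1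
    funext i
    simp [PTree.cmp, pull, rk]

theorem rk_injOn (J : Finset ℕ) : Set.InjOn (rk J) J := by
  intro a ha b hb h
  exact Nat.count_injective (p := fun i => decide (i ∈ J) = true) (by simpa using ha)
    (by simpa using hb) h

theorem rk_lt (J : Finset ℕ) {j : ℕ} (hj : j ∈ J) : rk J j < J.card := by
  obtain ⟨n, hn⟩ := J.exists_nat_subset_range
  rw [← count_eq_card J n hn]
  exact Nat.count_strict_mono (p := fun i => decide (i ∈ J) = true) (by simpa using hj)
    (by simpa using hn hj)

theorem image_rk (J : Finset ℕ) : J.image (rk J) = Finset.range J.card := by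
  apply Finset.eq_of_subset_of_card_le
  · intro i hi
    obtain ⟨j, hj, rfl⟩ := Finset.mem_image.mp hi
    exact Finset.mem_range.mpr (rk_lt J hj)
  · rw [Finset.card_range, Finset.card_image_of_injOn (rk_injOn J)]

theorem pull_inj (J I I' : Finset ℕ) (hI : I ⊆ Finset.range J.card)
    (hI' : I' ⊆ Finset.range J.card) (h : pull J I = pull J I') : I = I' := by
  have key : ∀ i < J.card, (i ∈ I ↔ i ∈ I') := by
    intro i hi
    have : i ∈ J.image (rk J) := by rw [image_rk]; simpa using hi
    obtain ⟨j, hj, rfl⟩ := Finset.mem_image.mp this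
    have := congrArg (j ∈ ·) h
    simpa [pull, hj] using this
  ext i
  constructor
  · intro h; exact (key i (by simpa using hI h)).1 h
  · intro h; exact (key i (by simpa using hI' h)).2 h

theorem pull_compl (J I : Finset ℕ) : pull J (Finset.range J.card \ I) = J \ pull J I := by
  ext j
  simp only [pull, Finset.mem_filter, Finset.mem_sdiff, Finset.mem_range]
  constructor
  · rintro ⟨h1, h2, h3⟩; exact ⟨h1, fun h => h3 h.2⟩
  · rintro ⟨h1, h2⟩; exact ⟨h1, rk_lt J h1, fun h => h2 ⟨h1, h⟩⟩

theorem pull_image (J A : Finset ℕ) (hA : A ⊆ J) : pull J (A.image (rk J)) = A := by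
  ext j
  simp only [pull, Finset.mem_filter, Finset.mem_image]
  constructor
  · rintro ⟨h1, a, ha, h2⟩
    rwa [← rk_injOn J (hA ha) h1 h2]
  · intro h; exact ⟨hA h, j, h, rfl⟩

theorem mem_NFinset (S T V : OT) (I : Finset ℕ) : I ∈ NFinset S T V ↔
    I ⊆ Finset.range (degO V) ∧ contractO V I = S ∧
      contractO V (Finset.range (degO V) \ I) = T := by
  simp [NFinset]

theorem mem_NFinset3 (R S T V : OT) (q : Finset ℕ × Finset ℕ × Finset ℕ) :
    q ∈ NFinset3 R S T V ↔
    Disjoint q.1 q.2.1 ∧ Disjoint q.1 q.2.2 ∧ Disjoint q.2.1 q.2.2 ∧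
    q.1 ∪ q.2.1 ∪ q.2.2 = Finset.range (degO V) ∧
    contractO V q.1 = R ∧ contractO V q.2.1 = S ∧ contractO V q.2.2 = T := by
  simp only [NFinset3, Finset.mem_filter, Finset.mem_product, Finset.mem_powerset,
    and_iff_right_iff_imp]
  rintro ⟨-, -, -, h, -⟩
  rw [← h]
  refine ⟨?_, ?_, ?_⟩ <;> intro i hi <;> simp [hi]

theorem Ncount_comm (S T V : OT) : Ncount S T V = Ncount T S V := by
  refine Finset.card_bij' (fun I _ => Finset.range (degO V) \ I)
    (fun I _ => Finset.range (degO V) \ I) ?_ ?_ ?_ ?_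
  · intro I hI
    rw [mem_NFinset] at hI ⊢
    rw [Finset.sdiff_sdiff_eq_self hI.1]
    exact ⟨Finset.sdiff_subset, hI.2.2, hI.2.1⟩
  · intro I hI
    rw [mem_NFinset] at hI ⊢
    rw [Finset.sdiff_sdiff_eq_self hI.1]
    exact ⟨Finset.sdiff_subset, hI.2.2, hI.2.1⟩
  · intro I hI
    exact Finset.sdiff_sdiff_eq_self ((mem_NFinset _ _ _ _).1 hI).1
  · intro I hI
    exact Finset.sdiff_sdiff_eq_self ((mem_NFinset _ _ _ _).1 hI).1

theorem N3_rot (R S T V : OT) : (NFinset3 S T R V).card = (NFinset3 R S T V).card := by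
  refine Finset.card_bij' (fun q _ => (q.2.2, q.1, q.2.1)) (fun q _ => (q.2.1, q.2.2, q.1))
    ?_ ?_ (fun _ _ => rfl) (fun _ _ => rfl)
  · rintro ⟨a, b, c⟩ h
    rw [mem_NFinset3] at h ⊢
    obtain ⟨h1, h2, h3, h4, h5, h6, h7⟩ := h
    refine ⟨h2.symm, h3.symm, h1, ?_, h7, h5, h6⟩
    rw [← h4]; ext; simp; tauto
  · rintro ⟨a, b, c⟩ h
    rw [mem_NFinset3] at h ⊢
    obtain ⟨h1, h2, h3, h4, h5, h6, h7⟩ := h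
    refine ⟨h3, h1.symm, h2.symm, ?_, h6, h7, h5⟩
    rw [← h4]; ext; simp; tauto

theorem ROT_of_Ncount {W T V : OT} (h : Ncount W T V ≠ 0) : ROT W := by
  obtain ⟨I, hI⟩ := Finset.card_ne_zero.mp h
  rw [mem_NFinset] at hI
  rw [← hI.2.1]
  exact ROT_contractO V I hI.1

theorem degO_of_Ncount {S T V : OT} (h : Ncount S T V ≠ 0) : degO V = degO S + degO T := by
  obtain ⟨I, hI⟩ := Finset.card_ne_zero.mp h
  rw [mem_NFinset] at hI
  rw [← hI.2.1, ← hI.2.2, degO_contractO V I hI.1, degO_contractO V _ Finset.sdiff_subset,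
    Finset.card_sdiff_of_subset hI.1, Finset.card_range]
  have := Finset.card_le_card hI.1
  rw [Finset.card_range] at this
  omega

theorem finite_ROT (n : ℕ) : {V : OT | ROT V ∧ degO V < n}.Finite := by
  refine (((finite_reduced n).image some).insert none).subset ?_
  rintro (_ | t) ⟨h1, h2⟩
  · exact Or.inl rfl
  · exact Or.inr ⟨t, ⟨h1 t rfl, h2⟩, rfl⟩

theorem finite_Ncount (S T : OT) : {V : OT | ROT V ∧ Ncount S T V ≠ 0}.Finite := by
  refine (finite_ROT (degO S + degO T + 1)).subset ?_
  rintro V ⟨h1, h2⟩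
  exact ⟨h1, by rw [degO_of_Ncount h2]; omega⟩

/-- the reduced trees occurring in `S ⧢ T` -/
noncomputable def shA (S T : OT) : Finset OT := (finite_Ncount S T).toFinset

theorem mem_shA (S T V : OT) : V ∈ shA S T ↔ ROT V ∧ Ncount S T V ≠ 0 := by
  simp [shA]

open Classical in
theorem N3_card (R S T V : OT) : (NFinset3 R S T V).card =
    ∑ J ∈ (Finset.range (degO V)).powerset.filter
      (fun J => contractO V (Finset.range (degO V) \ J) = T), Ncount R S (contractO V J) := by
  unfold Ncount
  rw [← Finset.card_sigma]
  symm
  refine Finset.card_bij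
    (fun q _ => (pull q.1 q.2, q.1 \ pull q.1 q.2, Finset.range (degO V) \ q.1)) ?_ ?_ ?_
  · rintro ⟨J, I⟩ h
    simp only [Finset.mem_sigma, Finset.mem_filter, Finset.mem_powerset, mem_NFinset] at h
    obtain ⟨⟨h1, h2⟩, h3, h4, h5⟩ := h
    rw [degO_contractO V J h1] at h3 h5
    rw [contractO_contractO V J _ h1 h3] at h4
    rw [contractO_contractO V J _ h1 Finset.sdiff_subset, pull_compl] at h5
    have hp : pull J I ⊆ J := Finset.filter_subset _ _
    rw [mem_NFinset3]
    refine ⟨Finset.disjoint_sdiff, ?_, ?_, ?_, h4, h5, h2⟩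
    · exact Finset.disjoint_of_subset_left hp Finset.disjoint_sdiff
    · exact Finset.disjoint_of_subset_left Finset.sdiff_subset Finset.disjoint_sdiff
    · simp only
      rw [Finset.union_sdiff_of_subset hp, Finset.union_sdiff_of_subset h1]
  · rintro ⟨J, I⟩ h ⟨J', I'⟩ h' heq
    simp only [Finset.mem_sigma, Finset.mem_filter, Finset.mem_powerset, mem_NFinset] at h h'
    simp only [Prod.mk.injEq] at heq
    obtain ⟨e1, -, e3⟩ := heq
    have : J = J' := by
      rw [← Finset.sdiff_sdiff_eq_self h.1.1, e3, Finset.sdiff_sdiff_eq_self h'.1.1]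
    subst this
    have h3 := h.2.1
    have h3' := h'.2.1
    rw [degO_contractO V J h.1.1] at h3 h3'
    rw [pull_inj J I I' h3 h3' e1]
  · rintro ⟨a, b, c⟩ h
    rw [mem_NFinset3] at h
    obtain ⟨h1, h2, h3, h4, h5, h6, h7⟩ := h
    simp only at h1 h2 h3 h4 h5 h6 h7
    have hJ : a ∪ b ⊆ Finset.range (degO V) := by rw [← h4]; exact Finset.subset_union_left
    have hc : Finset.range (degO V) \ (a ∪ b) = c := by
      rw [← h4, Finset.union_sdiff_cancel_left]
      exact Finset.disjoint_union_left.mpr ⟨h2, h3⟩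
    have ha : a ⊆ a ∪ b := Finset.subset_union_left
    have hb : (a ∪ b) \ a = b := Finset.union_sdiff_cancel_left h1
    have hI : a.image (rk (a ∪ b)) ⊆ Finset.range (a ∪ b).card := by
      rw [← image_rk]; exact Finset.image_subset_image ha
    have hp := pull_image (a ∪ b) a ha
    refine ⟨⟨a ∪ b, a.image (rk (a ∪ b))⟩, ?_, ?_⟩
    · simp only [Finset.mem_sigma, Finset.mem_filter, Finset.mem_powerset, mem_NFinset]
      rw [degO_contractO V _ hJ, contractO_contractO V _ _ hJ hI,
        contractO_contractO V _ _ hJ Finset.sdiff_subset, pull_compl, hp, hb, hc]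
      exact ⟨⟨hJ, h7⟩, hI, h5, h6⟩
    · simp only [hp, hb, hc]

theorem sum_shA (R S T V : OT) :
    ∑ W ∈ shA R S, Ncount R S W * Ncount W T V = (NFinset3 R S T V).card := by
  classical
  rw [N3_card]
  set X := (Finset.range (degO V)).powerset.filter
      (fun J => contractO V (Finset.range (degO V) \ J) = T) with hX
  have h1 : ∀ W, Ncount R S W * Ncount W T V =
      ∑ J ∈ X with contractO V J = W, Ncount R S (contractO V J) := by
    intro W
    rw [Finset.sum_congr rfl (g := fun _ => Ncount R S W)
      (fun J hJ => by rw [(Finset.mem_filter.mp hJ).2]), Finset.sum_const, smul_eq_mul, mul_comm]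
    congr 1
    unfold Ncount
    congr 1
    ext J
    simp only [mem_NFinset, hX, Finset.mem_filter, Finset.mem_powerset]
    tauto
  simp only [h1]
  refine Finset.sum_fiberwise_eq_sum_filter X (shA R S) (fun J => contractO V J)
    (fun J => Ncount R S (contractO V J)) |>.trans ?_
  refine Finset.sum_filter_of_ne ?_
  intro J hJ h
  rw [mem_shA]
  refine ⟨ROT_contractO V J ?_, h⟩
  simp only [hX, Finset.mem_filter, Finset.mem_powerset] at hJ
  exact hJ.1

theorem sum_shA' (R S T V : OT) :
    ∑ W ∈ shA S T, Ncount S T W * Ncount R W V = (NFinset3 R S T V).card := by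
  rw [← N3_rot, ← sum_shA]
  exact Finset.sum_congr rfl fun W _ => by rw [Ncount_comm R W]

theorem finsum_shA {M : Type} [AddCommMonoid M] (S T : OT) (f : OT → M)
    (hf : ∀ W, Ncount S T W = 0 → f W = 0) :
    ∑ᶠ (W : OT) (_ : ROT W), f W = ∑ W ∈ shA S T, f W := by
  refine finsum_mem_eq_sum_of_inter_support_eq (s := {W | ROT W}) f ?_
  ext W
  simp only [Set.mem_inter_iff, Set.mem_ofPred_eq, Function.mem_support, Finset.mem_coe, mem_shA]
  have := hf W
  tauto

theorem shuffleM_eq (K : Type) [Field K] (S T : OT) :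
    shuffleM K S T = ∑ V ∈ shA S T, Finsupp.single V ((Ncount S T V : K)) :=
  finsum_shA S T _ (fun W h => by simp [h])

open Classical in
theorem shuffleM_apply (K : Type) [Field K] (S T V : OT) :
    shuffleM K S T V = if ROT V then (Ncount S T V : K) else 0 := by
  rw [shuffleM_eq, Finsupp.finsetSum_apply]
  simp only [Finsupp.single_apply, Finset.sum_ite_eq', mem_shA]
  by_cases h : ROT V <;> by_cases h' : Ncount S T V = 0 <;> simp [h, h']

theorem shuffleM_sum {M : Type} [AddCommMonoid M] (K : Type) [Field K] (S T : OT)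
    (g : OT → K → M) (hg : ∀ W, g W 0 = 0) :
    (shuffleM K S T).sum g = ∑ W ∈ shA S T, g W (Ncount S T W : K) := by
  classical
  rw [Finsupp.sum_of_support_subset _ (s := shA S T) _ g (fun W _ => hg W)]
  · refine Finset.sum_congr rfl fun W hW => ?_
    rw [shuffleM_apply, if_pos ((mem_shA _ _ _).1 hW).1]
  · intro W hW
    rw [Finsupp.mem_support_iff, shuffleM_apply] at hW
    rw [mem_shA]
    by_cases h : ROT W
    · refine ⟨h, fun h0 => hW ?_⟩
      simp [h0]
    · simp [h] at hW

theorem shuffleF_single (K : Type) [Field K] (S T : OT) :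
    shuffleF K (Finsupp.single S 1) (Finsupp.single T 1) = shuffleM K S T := by
  simp [shuffleF]

theorem shuffle_assoc_aux (K : Type) [Field K] (R S T : OT) :
    shuffleF K (shuffleF K (Finsupp.single R 1) (Finsupp.single S 1)) (Finsupp.single T 1)
        = shuffleF K (Finsupp.single R 1)
            (shuffleF K (Finsupp.single S 1) (Finsupp.single T 1)) := by
  classical
  rw [shuffleF_single, shuffleF_single]
  have hL : shuffleF K (shuffleM K R S) (Finsupp.single T 1) =
      ∑ W ∈ shA R S, (Ncount R S W : K) • shuffleM K W T := by
    rw [shuffleF, shuffleM_sum]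
    · simp
    · simp
  have hR : shuffleF K (Finsupp.single R 1) (shuffleM K S T) =
      ∑ W ∈ shA S T, (Ncount S T W : K) • shuffleM K R W := by
    rw [shuffleF, Finsupp.sum_single_index, shuffleM_sum]
    · simp
    · simp
    · simp
  rw [hL, hR]
  ext V
  rw [Finsupp.finsetSum_apply, Finsupp.finsetSum_apply]
  simp only [Finsupp.smul_apply, shuffleM_apply, smul_eq_mul]
  by_cases h : ROT V
  · simp only [h, if_true]
    have := (sum_shA R S T V).trans (sum_shA' R S T V).symm
    exact_mod_cast congrArg (Nat.cast : ℕ → K) this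
  · simp [h]

end

/-- `Σ_{W ∈ PRT'} #N_{R,S}(W)·#N_{W,T}(V) = #N_{R,S,T}(V)
= Σ_{W ∈ PRT'} #N_{S,T}(W)·#N_{R,W}(V)`, all sums having only finitely many nonzero terms;
consequently `(R ⧢ S) ⧢ T = R ⧢ (S ⧢ T)`. -/
theorem Ncount3_and_shuffle_assoc (K : Type) [Field K] (R S T V : OT)
    (hR : ROT R) (hS : ROT S) (hT : ROT T) (hV : ROT V) :
    {W : OT | ROT W ∧ Ncount R S W * Ncount W T V ≠ 0}.Finite ∧
      {W : OT | ROT W ∧ Ncount S T W * Ncount R W V ≠ 0}.Finite ∧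
      (∑ᶠ (W : OT) (_ : ROT W), Ncount R S W * Ncount W T V) = (NFinset3 R S T V).card ∧
      ((NFinset3 R S T V).card
        = ∑ᶠ (W : OT) (_ : ROT W), Ncount S T W * Ncount R W V) ∧
      shuffleF K (shuffleF K (Finsupp.single R 1) (Finsupp.single S 1)) (Finsupp.single T 1)
        = shuffleF K (Finsupp.single R 1)
            (shuffleF K (Finsupp.single S 1) (Finsupp.single T 1)) := by
  refine ⟨?_, ?_, ?_, ?_, shuffle_assoc_aux K R S T⟩
  · exact (finite_Ncount R S).subset fun W hW => ⟨hW.1, left_ne_zero_of_mul hW.2⟩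
  · exact (finite_Ncount S T).subset fun W hW => ⟨hW.1, left_ne_zero_of_mul hW.2⟩
  · rw [finsum_shA R S _ (fun W h => by simp [h]), sum_shA]
  · rw [finsum_shA S T _ (fun W h => by simp [h]), sum_shA']
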